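/- arXiv:2310.11549 — 7 statements merged into one kernel-verified Lean document; each statement's English description precedes it below -/
import Mathlib

section
/- Smooth functions u,v: ℝ² → ℝ (of variables x,t) satisfy the Boussinesq system u_t = −3u_{xx} + 6v_x, v_t = −2u_{xxx} + 3v_{xx} − 2uu_x if and only if for every time t, every smooth ψ: ℝ → ℝ and every x ∈ ℝ one has u_t ψ' + v_t ψ = A(Lψ) − L(Aψ) at (x,t), where L and A are the x-differential operators (with coefficients frozen at time t) Lψ = ψ''' + uψ' + vψ and Aψ = 3ψ'' + 2uψ. -/
/-!
The operators `A = 3D² + 2u` and `L = D³ + uD + v` are chosen so that the commutator `[A, L]`, a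
priori of order four, has order one: `commutator_eq` computes, at a fixed time,
`[A, L]ψ = (-3 u_xx + 6 v_x) ψ_x + (-2 u_xxx + 3 v_xx - 2 u u_x) ψ`.
The Boussinesq system says that these two coefficients are `u_t` and `v_t`, which gives one
direction. Conversely, the coefficients of a first-order operator are recovered at a point `x` by
testing it on `ψ = 1` and on `ψ = (· - x)`.
-/

noncomputable section

/-- Partial derivative in the first variable (x). -/
def pdx (f : ℝ → ℝ → ℝ) : ℝ → ℝ → ℝ := fun x t => deriv (fun x' => f x' t) x

/-- Partial derivative in the second variable (t). -/
def pdt (f : ℝ → ℝ → ℝ) : ℝ → ℝ → ℝ := fun x t => deriv (fun t' => f x t') t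

/-- The Boussinesq Lax operator `L = D³ + uD + v` with coefficients `u v : ℝ → ℝ`. -/
def Lop (u v ψ : ℝ → ℝ) : ℝ → ℝ := fun x =>
  deriv^[3] ψ x + u x * deriv ψ x + v x * ψ x

/-- The operator `A = 3D² + 2u`. -/
def Aop (u ψ : ℝ → ℝ) : ℝ → ℝ := fun x =>
  3 * deriv^[2] ψ x + 2 * u x * ψ x

theorem hasDerivAt_deriv_iterate {f : ℝ → ℝ} (hf : ContDiff ℝ (⊤ : ℕ∞) f) (n : ℕ) (x : ℝ) :
    HasDerivAt (deriv^[n] f) (deriv^[n + 1] f x) x := by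
  rw [Function.iterate_succ_apply']
  exact ((hf.iterate_deriv n).differentiable (by simp) x).hasDerivAt

/-- The commutator of `A = 3D² + 2f` and `L = D³ + fD + g` is a first-order operator. -/
theorem commutator_eq {f g p : ℝ → ℝ} (hf : ContDiff ℝ (⊤ : ℕ∞) f)
    (hg : ContDiff ℝ (⊤ : ℕ∞) g) (hp : ContDiff ℝ (⊤ : ℕ∞) p) (x : ℝ) :
    Aop f (Lop f g p) x - Lop f g (Aop f p) x =
      (-3 * deriv (deriv f) x + 6 * deriv g x) * deriv p x +
      (-2 * deriv (deriv (deriv f)) x + 3 * deriv (deriv g) x - 2 * f x * deriv f x) * p x := by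
  have F := hasDerivAt_deriv_iterate hf
  have G := hasDerivAt_deriv_iterate hg
  have P := hasDerivAt_deriv_iterate hp
  have hL : Lop f g p = fun y => deriv^[3] p y + deriv^[0] f y * deriv^[1] p y
      + deriv^[0] g y * deriv^[0] p y := rfl
  have hL1 : deriv (Lop f g p) = fun y => deriv^[4] p y
      + (deriv^[1] f y * deriv^[1] p y + deriv^[0] f y * deriv^[2] p y)
      + (deriv^[1] g y * deriv^[0] p y + deriv^[0] g y * deriv^[1] p y) := by
    rw [hL]; funext y
    exact (((P 3 y).add ((F 0 y).mul (P 1 y))).add ((G 0 y).mul (P 0 y))).deriv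
  have hL2 : deriv (deriv (Lop f g p)) x = deriv^[5] p x
      + ((deriv^[2] f x * deriv^[1] p x + deriv^[1] f x * deriv^[2] p x)
        + (deriv^[1] f x * deriv^[2] p x + deriv^[0] f x * deriv^[3] p x))
      + ((deriv^[2] g x * deriv^[0] p x + deriv^[1] g x * deriv^[1] p x)
        + (deriv^[1] g x * deriv^[1] p x + deriv^[0] g x * deriv^[2] p x)) := by
    rw [hL1]
    exact (((P 4 x).add (((F 1 x).mul (P 1 x)).add ((F 0 x).mul (P 2 x)))).add
      (((G 1 x).mul (P 0 x)).add ((G 0 x).mul (P 1 x)))).deriv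
  have hA : Aop f p = fun y => 3 * deriv^[2] p y + 2 * (deriv^[0] f y * deriv^[0] p y) := by
    funext y; simp only [Aop, Function.iterate_zero, id]; ring
  have hA1 : deriv (Aop f p) = fun y => 3 * deriv^[3] p y
      + 2 * (deriv^[1] f y * deriv^[0] p y + deriv^[0] f y * deriv^[1] p y) := by
    rw [hA]; funext y
    exact (((P 2 y).const_mul 3).add (((F 0 y).mul (P 0 y)).const_mul 2)).deriv
  have hA2 : deriv (deriv (Aop f p)) = fun y => 3 * deriv^[4] p y
      + 2 * ((deriv^[2] f y * deriv^[0] p y + deriv^[1] f y * deriv^[1] p y)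
        + (deriv^[1] f y * deriv^[1] p y + deriv^[0] f y * deriv^[2] p y)) := by
    rw [hA1]; funext y
    exact (((P 3 y).const_mul 3).add ((((F 1 y).mul (P 0 y)).add
      ((F 0 y).mul (P 1 y))).const_mul 2)).deriv
  have hA3 : deriv (deriv (deriv (Aop f p))) x = 3 * deriv^[5] p x
      + 2 * (((deriv^[3] f x * deriv^[0] p x + deriv^[2] f x * deriv^[1] p x)
          + (deriv^[2] f x * deriv^[1] p x + deriv^[1] f x * deriv^[2] p x))
        + ((deriv^[2] f x * deriv^[1] p x + deriv^[1] f x * deriv^[2] p x)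
          + (deriv^[1] f x * deriv^[2] p x + deriv^[0] f x * deriv^[3] p x))) := by
    rw [hA2]
    exact (((P 4 x).const_mul 3).add (((((F 2 x).mul (P 0 x)).add ((F 1 x).mul (P 1 x))).add
      (((F 1 x).mul (P 1 x)).add ((F 0 x).mul (P 2 x)))).const_mul 2)).deriv
  have e1 : Aop f (Lop f g p) x = 3 * deriv (deriv (Lop f g p)) x + 2 * f x * Lop f g p x := rfl
  have e2 : Lop f g (Aop f p) x = deriv (deriv (deriv (Aop f p))) x + f x * deriv (Aop f p) x
      + g x * Aop f p x := rfl
  rw [e1, e2, hL2, hA3, hA1, hA, hL]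
  simp only [Function.iterate_succ, Function.iterate_zero, Function.comp, id]
  ring

theorem stmt0 (u v : ℝ → ℝ → ℝ)
    (hu : ContDiff ℝ (⊤ : ℕ∞) (Function.uncurry u))
    (hv : ContDiff ℝ (⊤ : ℕ∞) (Function.uncurry v)) :
    ((∀ x t, pdt u x t = -3 * pdx (pdx u) x t + 6 * pdx v x t) ∧
     (∀ x t, pdt v x t = -2 * pdx (pdx (pdx u)) x t + 3 * pdx (pdx v) x t
        - 2 * u x t * pdx u x t)) ↔
    (∀ (t : ℝ) (ψ : ℝ → ℝ), ContDiff ℝ (⊤ : ℕ∞) ψ → ∀ x : ℝ,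
      pdt u x t * deriv ψ x + pdt v x t * ψ x =
        Aop (fun y => u y t) (Lop (fun y => u y t) (fun y => v y t) ψ) x
          - Lop (fun y => u y t) (fun y => v y t) (Aop (fun y => u y t) ψ) x) := by
  have hu' (t : ℝ) : ContDiff ℝ (⊤ : ℕ∞) fun y => u y t :=
    hu.comp (contDiff_id.prodMk contDiff_const)
  have hv' (t : ℝ) : ContDiff ℝ (⊤ : ℕ∞) fun y => v y t :=
    hv.comp (contDiff_id.prodMk contDiff_const)
  have key (t : ℝ) (ψ : ℝ → ℝ) (hψ : ContDiff ℝ (⊤ : ℕ∞) ψ) (x : ℝ) :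
      Aop (fun y => u y t) (Lop (fun y => u y t) (fun y => v y t) ψ) x
          - Lop (fun y => u y t) (fun y => v y t) (Aop (fun y => u y t) ψ) x =
        (-3 * pdx (pdx u) x t + 6 * pdx v x t) * deriv ψ x +
        (-2 * pdx (pdx (pdx u)) x t + 3 * pdx (pdx v) x t - 2 * u x t * pdx u x t) * ψ x :=
    commutator_eq (hu' t) (hv' t) hψ x
  constructor
  · rintro ⟨h1, h2⟩ t ψ hψ x
    rw [key t ψ hψ x, h1, h2]
  · intro h
    refine ⟨fun x t => ?_, fun x t => ?_⟩
    -- `ψ = (· - x)` vanishes at `x` and has derivative `1` there.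
    · have hψ : ContDiff ℝ (⊤ : ℕ∞) fun y : ℝ => y - x := contDiff_id.sub contDiff_const
      have := h t _ hψ x
      rw [key t _ hψ x] at this
      simpa using this
    · have hψ : ContDiff ℝ (⊤ : ℕ∞) fun _ : ℝ => (1 : ℝ) := contDiff_const
      have := h t _ hψ x
      rw [key t _ hψ x] at this
      simpa using this
end
end

section
/- Let α ∈ ℝ and let u, v, p, q: ℝ → ℝ be smooth. Define, for smooth ψ: ℝ → ℝ, the operators Lψ = ψ''' + uψ' + vψ, Mψ = p_x ψ' + q_x ψ, and Pψ = −(1/3)p ψ'' + (1/3)(p_x − q)ψ' − (1/9)(2p_{xx} − 3q_x + 2up)ψ. Then the identity M(Lψ − αψ) = P(Lψ) − L(Pψ) holds for every smooth ψ and every x ∈ ℝ if and only if the following two equations hold identically on ℝ: (E1) p_{xxxx} + u p_{xx} + (2u_x − 3(v − α))p_x + (u_{xx} − 2v_x)p − 2q_{xxx} − 2u q_x − u_x q = 0, and (E2) 2u p_{xxx} + 6(v − α)p_{xx} + 2(2v_x + u²)p_x + (v_{xx} + 2uu_x)p + q_{xxxx} + u q_{xx} + 3(2u_x − 3(v − α))q_x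 + (2u_{xx} − 3v_x)q = 0. -/
/-!
Write `(E1)`, `(E2)` for the left-hand sides of the two equations. In the operator
`[P, L] - M (L - α)` the coefficients of `D⁵, …, D²` cancel, the coefficient of `D` is `(E1) / 3`
and the coefficient of `1` is `((E2) + 2 (E1)ₓ) / 9` (`nine_mul_defect`). Hence the equations imply
the operator identity. Conversely `ψ = 1` gives `(E2) + 2 (E1)ₓ = 0`, then `ψ = x` gives
`(E1) = 0` everywhere, so `(E1)ₓ = 0` and `(E2) = 0`.
-/

noncomputable section

/-- The operator `M = p_x D + q_x` playing the role of `L_z`. -/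
def Mop (p q ψ : ℝ → ℝ) : ℝ → ℝ := fun x =>
  deriv p x * deriv ψ x + deriv q x * ψ x

/-- The operator `P = -(1/3)pD² + (1/3)(p_x - q)D - (1/9)(2p_{xx} - 3q_x + 2up)`. -/
def Pop (u p q ψ : ℝ → ℝ) : ℝ → ℝ := fun x =>
  -(1/3) * p x * deriv^[2] ψ x + (1/3) * (deriv p x - q x) * deriv ψ x
    - (1/9) * (2 * deriv^[2] p x - 3 * deriv q x + 2 * u x * p x) * ψ x

/-- Left-hand side of the first equation. -/
def eqOne (α : ℝ) (u v p q : ℝ → ℝ) : ℝ → ℝ := fun x =>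
  deriv^[4] p x + u x * deriv^[2] p x
    + (2 * deriv u x - 3 * (v x - α)) * deriv p x
    + (deriv^[2] u x - 2 * deriv v x) * p x
    - 2 * deriv^[3] q x - 2 * u x * deriv q x - deriv u x * q x

/-- Left-hand side of the second equation. -/
def eqTwo (α : ℝ) (u v p q : ℝ → ℝ) : ℝ → ℝ := fun x =>
  2 * u x * deriv^[3] p x + 6 * (v x - α) * deriv^[2] p x
    + 2 * (2 * deriv v x + u x ^ 2) * deriv p x
    + (deriv^[2] v x + 2 * u x * deriv u x) * p x
    + deriv^[4] q x + u x * deriv^[2] q x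
    + 3 * (2 * deriv u x - 3 * (v x - α)) * deriv q x
    + (2 * deriv^[2] u x - 3 * deriv v x) * q x

/-- The successive derivatives of a smooth function, as an abstract sequence: this form lets the
product rule be applied by `simp` without unfolding iterates of `deriv`. -/
lemma exists_jet {f : ℝ → ℝ} (hf : ContDiff ℝ (⊤ : ℕ∞) f) :
    ∃ F : ℕ → ℝ → ℝ, f = F 0 ∧ (∀ n, Differentiable ℝ (F n)) ∧ ∀ n, deriv (F n) = F (n + 1) := by
  refine ⟨fun n => deriv^[n] f, rfl, fun n => ?_, fun n => ?_⟩
  · exact (hf.iterate_deriv n).differentiable (by simp)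
  · exact (Function.iterate_succ_apply' deriv n f).symm

lemma deriv_add_fun {f g : ℝ → ℝ} (hf : Differentiable ℝ f) (hg : Differentiable ℝ g) :
    deriv (fun y => f y + g y) = fun y => deriv f y + deriv g y :=
  funext fun y => deriv_fun_add (hf y) (hg y)

lemma deriv_sub_fun {f g : ℝ → ℝ} (hf : Differentiable ℝ f) (hg : Differentiable ℝ g) :
    deriv (fun y => f y - g y) = fun y => deriv f y - deriv g y :=
  funext fun y => deriv_fun_sub (hf y) (hg y)

lemma deriv_mul_fun {f g : ℝ → ℝ} (hf : Differentiable ℝ f) (hg : Differentiable ℝ g) :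
    deriv (fun y => f y * g y) = fun y => deriv f y * g y + f y * deriv g y :=
  funext fun y => deriv_fun_mul (hf y) (hg y)

/-- The defect of the Lax equation is a first-order operator in `ψ`, with coefficients built from
the two equations. -/
lemma nine_mul_defect (α : ℝ) {u v p q ψ : ℝ → ℝ}
    (hu : ContDiff ℝ (⊤ : ℕ∞) u) (hv : ContDiff ℝ (⊤ : ℕ∞) v)
    (hp : ContDiff ℝ (⊤ : ℕ∞) p) (hq : ContDiff ℝ (⊤ : ℕ∞) q)
    (hψ : ContDiff ℝ (⊤ : ℕ∞) ψ) (x : ℝ) :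
    9 * (Pop u p q (Lop u v ψ) x - Lop u v (Pop u p q ψ) x
        - Mop p q (fun y => Lop u v ψ y - α * ψ y) x) =
      3 * eqOne α u v p q x * deriv ψ x
        + (eqTwo α u v p q x + 2 * deriv (eqOne α u v p q) x) * ψ x := by
  obtain ⟨U, rfl, hU, dU⟩ := exists_jet hu
  obtain ⟨V, rfl, hV, dV⟩ := exists_jet hv
  obtain ⟨R, rfl, hR, dR⟩ := exists_jet hp
  obtain ⟨Q, rfl, hQ, dQ⟩ := exists_jet hq
  obtain ⟨S, rfl, hS, dS⟩ := exists_jet hψ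
  clear hu hv hp hq hψ
  unfold Pop Lop Mop eqOne eqTwo
  simp (disch := fun_prop) only [Function.iterate_succ, Function.iterate_zero, Function.comp_apply,
    id_eq, dU, dV, dR, dQ, dS, deriv_add_fun, deriv_sub_fun, deriv_mul_fun, deriv_const',
    Nat.reduceAdd]
  ring

theorem stmt1 (α : ℝ) (u v p q : ℝ → ℝ)
    (hu : ContDiff ℝ (⊤ : ℕ∞) u) (hv : ContDiff ℝ (⊤ : ℕ∞) v)
    (hp : ContDiff ℝ (⊤ : ℕ∞) p) (hq : ContDiff ℝ (⊤ : ℕ∞) q) :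
    (∀ (ψ : ℝ → ℝ), ContDiff ℝ (⊤ : ℕ∞) ψ → ∀ x : ℝ,
      Mop p q (fun y => Lop u v ψ y - α * ψ y) x =
        Pop u p q (Lop u v ψ) x - Lop u v (Pop u p q ψ) x) ↔
    ((∀ x : ℝ, deriv^[4] p x + u x * deriv^[2] p x
        + (2 * deriv u x - 3 * (v x - α)) * deriv p x
        + (deriv^[2] u x - 2 * deriv v x) * p x
        - 2 * deriv^[3] q x - 2 * u x * deriv q x - deriv u x * q x = 0) ∧
     (∀ x : ℝ, 2 * u x * deriv^[3] p x + 6 * (v x - α) * deriv^[2] p x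
        + 2 * (2 * deriv v x + u x ^ 2) * deriv p x
        + (deriv^[2] v x + 2 * u x * deriv u x) * p x
        + deriv^[4] q x + u x * deriv^[2] q x
        + 3 * (2 * deriv u x - 3 * (v x - α)) * deriv q x
        + (2 * deriv^[2] u x - 3 * deriv v x) * q x = 0)) := by
  have key := fun (ψ : ℝ → ℝ) (hψ : ContDiff ℝ (⊤ : ℕ∞) ψ) (x : ℝ) =>
    nine_mul_defect α hu hv hp hq hψ x
  change _ ↔ (∀ x, eqOne α u v p q x = 0) ∧ (∀ x, eqTwo α u v p q x = 0)
  constructor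
  · intro h
    have h0 : ∀ x, eqTwo α u v p q x + 2 * deriv (eqOne α u v p q) x = 0 := by
      intro x
      have k := key (fun _ => 1) contDiff_const x
      rw [h (fun _ => 1) contDiff_const x] at k
      simp only [deriv_const] at k
      linarith
    have h1 : ∀ x, eqOne α u v p q x = 0 := by
      intro x
      have k := key (fun y => y) contDiff_fun_id x
      rw [h (fun y => y) contDiff_fun_id x, h0 x] at k
      simp only [deriv_id''] at k
      linarith
    refine ⟨h1, fun x => ?_⟩
    have hd : deriv (eqOne α u v p q) x = 0 := by
      rw [show eqOne α u v p q = fun _ => 0 from funext h1, deriv_const]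
    have := h0 x
    rw [hd] at this
    linarith
  · rintro ⟨h1, h2⟩ ψ hψ x
    have k := key ψ hψ x
    have hd : deriv (eqOne α u v p q) x = 0 := by
      rw [show eqOne α u v p q = fun _ => 0 from funext h1, deriv_const]
    rw [h1 x, h2 x, hd] at k
    linarith
end
end

section
/- Let α ∈ ℝ and let u, v, ψ, φ: ℝ → ℝ be smooth functions satisfying ψ''' + uψ' + vψ = αψ and −φ''' − (uφ)' + vφ = αφ on ℝ. Set g := φψ, w := φψ' − φ'ψ, and δ := φψ'' − φ'ψ' + φ''ψ + uφψ. Then at every point where g ≠ 0 the following hold: g'' = 3((g')² − w²)/(4g) − ug + δ, and w'' = g'w'/(2g) − w((g')² − w²)/(8g²) − δw/(2g) − (u/2)w + (2α − 2v + u_x)g (where u_x = u'). -/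
/-!
Both identities are pointwise algebra in the jets of `φ` and `ψ`. From `g' = φ'ψ + φψ'` one gets
`(g')² - w² = 4 g φ'ψ'`, which gives the formula for `g''`. Since `w' = φψ'' - φ''ψ`, the third
derivatives in `w''` enter only through `φψ''' - φ'''ψ`, which the two eigenvalue equations turn
into `(2α - 2v + u')g - u w`; the remaining term `φ'ψ'' - φ''ψ'` is recovered from
`2g(φ'ψ'' - φ''ψ') = g'w' - w(φψ'' + φ''ψ)` and `φψ'' + φ''ψ = δ + φ'ψ' - u g`.
-/

noncomputable section

/-- Product of eigenfunctions `g = φψ`. -/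
def gfun (ψ φ : ℝ → ℝ) : ℝ → ℝ := fun x => φ x * ψ x

/-- Wronskian of eigenfunctions `w = φψ' - φ'ψ`. -/
def wfun (ψ φ : ℝ → ℝ) : ℝ → ℝ := fun x => φ x * deriv ψ x - deriv φ x * ψ x

/-- The first integral `δ = φψ'' - φ'ψ' + φ''ψ + uφψ`. -/
def dfun (u ψ φ : ℝ → ℝ) : ℝ → ℝ := fun x =>
  φ x * deriv^[2] ψ x - deriv φ x * deriv ψ x + deriv^[2] φ x * ψ x + u x * φ x * ψ x

theorem stmt3 (α : ℝ) (u v ψ φ : ℝ → ℝ)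
    (hu : ContDiff ℝ (⊤ : ℕ∞) u) (hv : ContDiff ℝ (⊤ : ℕ∞) v)
    (hψ : ContDiff ℝ (⊤ : ℕ∞) ψ) (hφ : ContDiff ℝ (⊤ : ℕ∞) φ)
    (heigψ : ∀ x : ℝ, deriv^[3] ψ x + u x * deriv ψ x + v x * ψ x = α * ψ x)
    (heigφ : ∀ x : ℝ, -deriv^[3] φ x - deriv (fun y => u y * φ y) x + v x * φ x = α * φ x) :
    ∀ x : ℝ, gfun ψ φ x ≠ 0 →
      (deriv^[2] (gfun ψ φ) x =
          3 * ((deriv (gfun ψ φ) x) ^ 2 - (wfun ψ φ x) ^ 2) / (4 * gfun ψ φ x)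
            - u x * gfun ψ φ x + dfun u ψ φ x ∧
       deriv^[2] (wfun ψ φ) x =
          deriv (gfun ψ φ) x * deriv (wfun ψ φ) x / (2 * gfun ψ φ x)
            - wfun ψ φ x * ((deriv (gfun ψ φ) x) ^ 2 - (wfun ψ φ x) ^ 2)
                / (8 * (gfun ψ φ x) ^ 2)
            - dfun u ψ φ x * wfun ψ φ x / (2 * gfun ψ φ x)
            - (u x / 2) * wfun ψ φ x
            + (2 * α - 2 * v x + deriv u x) * gfun ψ φ x) := by
  intro x hx
  have hψ1 : ∀ y, HasDerivAt ψ (deriv ψ y) y := fun y =>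
    (hψ.differentiable (by simp) y).hasDerivAt
  have hφ1 : ∀ y, HasDerivAt φ (deriv φ y) y := fun y =>
    (hφ.differentiable (by simp) y).hasDerivAt
  have hψ2 : ∀ y, HasDerivAt (deriv ψ) (deriv^[2] ψ y) y := fun y =>
    ((hψ.iterate_deriv 1).differentiable (by simp) y).hasDerivAt
  have hφ2 : ∀ y, HasDerivAt (deriv φ) (deriv^[2] φ y) y := fun y =>
    ((hφ.iterate_deriv 1).differentiable (by simp) y).hasDerivAt
  have hψ3 : ∀ y, HasDerivAt (deriv^[2] ψ) (deriv^[3] ψ y) y := fun y =>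
    ((hψ.iterate_deriv 2).differentiable (by simp) y).hasDerivAt
  have hφ3 : ∀ y, HasDerivAt (deriv^[2] φ) (deriv^[3] φ y) y := fun y =>
    ((hφ.iterate_deriv 2).differentiable (by simp) y).hasDerivAt
  have hu1 : HasDerivAt u (deriv u x) x := (hu.differentiable (by simp) x).hasDerivAt
  have g1 : deriv (gfun ψ φ) = fun y => deriv φ y * ψ y + φ y * deriv ψ y :=
    funext fun y => ((hφ1 y).mul (hψ1 y)).deriv
  have g2 : deriv^[2] (gfun ψ φ) x = (deriv^[2] φ x * ψ x + deriv φ x * deriv ψ x)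
      + (deriv φ x * deriv ψ x + φ x * deriv^[2] ψ x) := by
    change deriv (deriv (gfun ψ φ)) x = _
    rw [g1]
    exact (((hφ2 x).mul (hψ1 x)).add ((hφ1 x).mul (hψ2 x))).deriv
  -- The two `φ'ψ'` terms in `w'` cancel.
  have w1 : deriv (wfun ψ φ) = fun y => φ y * deriv^[2] ψ y - deriv^[2] φ y * ψ y := by
    funext y
    refine (((hφ1 y).mul (hψ2 y)).sub ((hφ2 y).mul (hψ1 y))).deriv.trans ?_
    ring
  have w2 : deriv^[2] (wfun ψ φ) x = (deriv φ x * deriv^[2] ψ x + φ x * deriv^[3] ψ x)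
      - (deriv^[3] φ x * ψ x + deriv^[2] φ x * deriv ψ x) := by
    change deriv (deriv (wfun ψ φ)) x = _
    rw [w1]
    exact (((hφ1 x).mul (hψ3 x)).sub ((hφ3 x).mul (hψ1 x))).deriv
  have huφ : deriv (fun y => u y * φ y) x = deriv u x * φ x + u x * deriv φ x :=
    (hu1.mul (hφ1 x)).deriv
  have e1 : deriv^[3] ψ x = α * ψ x - u x * deriv ψ x - v x * ψ x := by
    linarith [heigψ x]
  have e2 : deriv^[3] φ x =
      -(deriv u x * φ x + u x * deriv φ x) + v x * φ x - α * φ x := by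
    linarith [heigφ x]
  rw [g2, w2, g1, w1, e1, e2]
  simp only [gfun, wfun, dfun] at hx ⊢
  have hφx : φ x ≠ 0 := left_ne_zero_of_mul hx
  have hψx : ψ x ≠ 0 := right_ne_zero_of_mul hx
  constructor
  · field_simp
    ring
  · field_simp
    ring
end
end

section
/- Let α ∈ ℝ and let u, v, ψ, φ: ℝ² → ℝ (variables x,t) be smooth with u, v satisfying the Boussinesq system u_t = −3u_{xx} + 6v_x, v_t = −2u_{xxx} + 3v_{xx} − 2uu_x, and with ψ, φ satisfying for all (x,t): ψ_{xxx} + uψ_x + vψ = αψ, −φ_{xxx} − (uφ)_x + vφ = αφ, ψ_t = 3ψ_{xx} + 2uψ, φ_t = −3φ_{xx} − 2uφ. Set g := φψ, w := φψ_x − φ_xψ, δ := φψ_{xx} − φ_xψ_x + φ_{xx}ψ + uφψ. Then δ_t = 0 everywhere, g_t = 3w_x everywhere, and at every point where g ≠ 0: w_t = −3g_x(g_x² − w²)/(8g²) + 3ww_x/(2g) − 3δg_x/(2g) − (3/2)u g_x + u_x g. -/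
/-!
Everything reduces to polynomial identities in the `x`-derivatives of `u, v, ψ, φ` at a point.
Since mixed partials commute (`pdt_pdx`), differentiating the evolution equations in `x` expresses
`ψ_{xt}`, `ψ_{xxt}`, `φ_{xt}`, `φ_{xxt}` through pure `x`-derivatives, and the eigenvalue equations
together with their `x`-derivatives eliminate the third and fourth `x`-derivatives of `ψ, φ`.

For the equation for `w_t`, both sides become combinations of `φ_{xx}ψ_x + φ_xψ_{xx}`, `u g_x` and
`u_x g`; the two facts behind the division by `g` are `g_x² - w² = 4 g φ_xψ_x` and
`w w_x - g_x (φψ_{xx} + φ_{xx}ψ) = -2 g (φ_{xx}ψ_x + φ_xψ_{xx})`.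
-/

noncomputable section

/-- Product of eigenfunctions `g = φψ`. -/
def gB (ψ φ : ℝ → ℝ → ℝ) : ℝ → ℝ → ℝ := fun x t => φ x t * ψ x t

/-- Wronskian of eigenfunctions `w = φψ_x - φ_xψ`. -/
def wB (ψ φ : ℝ → ℝ → ℝ) : ℝ → ℝ → ℝ := fun x t => φ x t * pdx ψ x t - pdx φ x t * ψ x t

/-- The quantity `δ = φψ_{xx} - φ_xψ_x + φ_{xx}ψ + uφψ`. -/
def dB (u ψ φ : ℝ → ℝ → ℝ) : ℝ → ℝ → ℝ := fun x t =>
  φ x t * pdx (pdx ψ) x t - pdx φ x t * pdx ψ x t + pdx (pdx φ) x t * ψ x t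
    + u x t * φ x t * ψ x t

/-- Joint smoothness of a function of the two variables `(x, t)`. -/
def SmoothB (f : ℝ → ℝ → ℝ) : Prop := ContDiff ℝ (⊤ : ℕ∞) (Function.uncurry f)

lemma SmoothB.hasDerivAt_fderiv_x {f : ℝ → ℝ → ℝ} (hf : SmoothB f) (x t : ℝ) :
    HasDerivAt (fun x' => f x' t) (fderiv ℝ (Function.uncurry f) (x, t) (1, 0)) x := by
  have h := ((ContDiff.differentiable hf (by simp)) (x, t)).hasFDerivAt
  exact h.comp_hasDerivAt (f := fun x' : ℝ => (x', t)) x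
    ((hasDerivAt_id x).prodMk (hasDerivAt_const x t))

lemma SmoothB.hasDerivAt_fderiv_t {f : ℝ → ℝ → ℝ} (hf : SmoothB f) (x t : ℝ) :
    HasDerivAt (fun t' => f x t') (fderiv ℝ (Function.uncurry f) (x, t) (0, 1)) t := by
  have h := ((ContDiff.differentiable hf (by simp)) (x, t)).hasFDerivAt
  exact h.comp_hasDerivAt (f := fun t' : ℝ => (x, t')) t
    ((hasDerivAt_const t x).prodMk (hasDerivAt_id t))

lemma SmoothB.uncurry_pdx {f : ℝ → ℝ → ℝ} (hf : SmoothB f) :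
    Function.uncurry (pdx f) = fun p => fderiv ℝ (Function.uncurry f) p (1, 0) := by
  ext ⟨x, t⟩
  exact (hf.hasDerivAt_fderiv_x x t).deriv

lemma SmoothB.uncurry_pdt {f : ℝ → ℝ → ℝ} (hf : SmoothB f) :
    Function.uncurry (pdt f) = fun p => fderiv ℝ (Function.uncurry f) p (0, 1) := by
  ext ⟨x, t⟩
  exact (hf.hasDerivAt_fderiv_t x t).deriv

lemma SmoothB.hasDerivAt_x {f : ℝ → ℝ → ℝ} (hf : SmoothB f) (x t : ℝ) :
    HasDerivAt (fun x' => f x' t) (pdx f x t) x :=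
  (hf.hasDerivAt_fderiv_x x t).differentiableAt.hasDerivAt

lemma SmoothB.hasDerivAt_t {f : ℝ → ℝ → ℝ} (hf : SmoothB f) (x t : ℝ) :
    HasDerivAt (fun t' => f x t') (pdt f x t) t :=
  (hf.hasDerivAt_fderiv_t x t).differentiableAt.hasDerivAt

lemma SmoothB.fderiv_contDiff {f : ℝ → ℝ → ℝ} (hf : SmoothB f) :
    ContDiff ℝ (⊤ : ℕ∞) (fderiv ℝ (Function.uncurry f)) :=
  ContDiff.fderiv_right (m := (⊤ : ℕ∞)) hf (by simp)

lemma SmoothB.pdx {f : ℝ → ℝ → ℝ} (hf : SmoothB f) : SmoothB (pdx f) := by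
  unfold SmoothB
  rw [hf.uncurry_pdx]
  exact hf.fderiv_contDiff.clm_apply contDiff_const

lemma SmoothB.pdt {f : ℝ → ℝ → ℝ} (hf : SmoothB f) : SmoothB (pdt f) := by
  unfold SmoothB
  rw [hf.uncurry_pdt]
  exact hf.fderiv_contDiff.clm_apply contDiff_const

/-- Mixed partial derivatives of a smooth function commute. -/
lemma SmoothB.pdt_pdx {f : ℝ → ℝ → ℝ} (hf : SmoothB f) (x t : ℝ) :
    _root_.pdt (_root_.pdx f) x t = _root_.pdx (_root_.pdt f) x t := by
  have hd := (hf.fderiv_contDiff.differentiable (by simp) (x, t))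
  have h1 := congrFun hf.pdx.uncurry_pdt (x, t)
  have h2 := congrFun hf.pdt.uncurry_pdx (x, t)
  simp only [Function.uncurry_apply_pair] at h1 h2
  rw [h1, h2, hf.uncurry_pdx, hf.uncurry_pdt,
    fderiv_clm_apply hd (differentiableAt_const _), fderiv_clm_apply hd (differentiableAt_const _)]
  have hs : IsSymmSndFDerivAt ℝ (Function.uncurry f) (x, t) :=
    ContDiffAt.isSymmSndFDerivAt (ContDiff.contDiffAt hf)
      (by simpa using WithTop.coe_le_coe.2 (le_top : (2 : ℕ∞) ≤ ⊤))
  simpa using hs.eq (0, 1) (1, 0)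

theorem stmt4 (α : ℝ) (u v ψ φ : ℝ → ℝ → ℝ)
    (hu : ContDiff ℝ (⊤ : ℕ∞) (Function.uncurry u))
    (hv : ContDiff ℝ (⊤ : ℕ∞) (Function.uncurry v))
    (hψ : ContDiff ℝ (⊤ : ℕ∞) (Function.uncurry ψ))
    (hφ : ContDiff ℝ (⊤ : ℕ∞) (Function.uncurry φ))
    (hBq1 : ∀ x t, pdt u x t = -3 * pdx (pdx u) x t + 6 * pdx v x t)
    (hBq2 : ∀ x t, pdt v x t = -2 * pdx (pdx (pdx u)) x t + 3 * pdx (pdx v) x t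
      - 2 * u x t * pdx u x t)
    (heigψ : ∀ x t, pdx (pdx (pdx ψ)) x t + u x t * pdx ψ x t + v x t * ψ x t = α * ψ x t)
    (heigφ : ∀ x t, -pdx (pdx (pdx φ)) x t - pdx (fun a b => u a b * φ a b) x t
      + v x t * φ x t = α * φ x t)
    (hψt : ∀ x t, pdt ψ x t = 3 * pdx (pdx ψ) x t + 2 * u x t * ψ x t)
    (hφt : ∀ x t, pdt φ x t = -3 * pdx (pdx φ) x t - 2 * u x t * φ x t) :
    (∀ x t, pdt (dB u ψ φ) x t = 0) ∧
    (∀ x t, pdt (gB ψ φ) x t = 3 * pdx (wB ψ φ) x t) ∧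
    (∀ x t, gB ψ φ x t ≠ 0 →
      pdt (wB ψ φ) x t =
        -3 * pdx (gB ψ φ) x t * ((pdx (gB ψ φ) x t) ^ 2 - (wB ψ φ x t) ^ 2)
            / (8 * (gB ψ φ x t) ^ 2)
          + 3 * wB ψ φ x t * pdx (wB ψ φ) x t / (2 * gB ψ φ x t)
          - 3 * dB u ψ φ x t * pdx (gB ψ φ) x t / (2 * gB ψ φ x t)
          - (3 / 2) * u x t * pdx (gB ψ φ) x t + pdx u x t * gB ψ φ x t) := by
  replace hu : SmoothB u := hu
  replace hv : SmoothB v := hv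
  replace hψ : SmoothB ψ := hψ
  replace hφ : SmoothB φ := hφ
  -- the eigenvalue equations, solved for the third `x`-derivatives
  have eψ3 : pdx (pdx (pdx ψ)) = fun x t => α * ψ x t - u x t * pdx ψ x t - v x t * ψ x t := by
    funext x t
    linarith [heigψ x t]
  have eφ3 : pdx (pdx (pdx φ)) = fun x t =>
      v x t * φ x t - α * φ x t - (pdx u x t * φ x t + u x t * pdx φ x t) := by
    funext x t
    have h : pdx (fun a b => u a b * φ a b) x t = pdx u x t * φ x t + u x t * pdx φ x t :=
      ((hu.hasDerivAt_x x t).mul (hφ.hasDerivAt_x x t)).deriv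
    linarith [heigφ x t]
  -- their `x`-derivatives
  have eψ4 : ∀ x t, pdx (pdx (pdx (pdx ψ))) x t = α * pdx ψ x t
      - (pdx u x t * pdx ψ x t + u x t * pdx (pdx ψ) x t)
      - (pdx v x t * ψ x t + v x t * pdx ψ x t) := by
    intro x t
    rw [eψ3]
    exact ((((hψ.hasDerivAt_x x t).const_mul α).sub
      ((hu.hasDerivAt_x x t).mul (hψ.pdx.hasDerivAt_x x t))).sub
      ((hv.hasDerivAt_x x t).mul (hψ.hasDerivAt_x x t))).deriv
  have eφ4 : ∀ x t, pdx (pdx (pdx (pdx φ))) x t =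
      (pdx v x t * φ x t + v x t * pdx φ x t) - α * pdx φ x t
      - ((pdx (pdx u) x t * φ x t + pdx u x t * pdx φ x t)
        + (pdx u x t * pdx φ x t + u x t * pdx (pdx φ) x t)) := by
    intro x t
    rw [eφ3]
    exact ((((hv.hasDerivAt_x x t).mul (hφ.hasDerivAt_x x t)).sub
      ((hφ.hasDerivAt_x x t).const_mul α)).sub
      (((hu.pdx.hasDerivAt_x x t).mul (hφ.hasDerivAt_x x t)).add
      ((hu.hasDerivAt_x x t).mul (hφ.pdx.hasDerivAt_x x t)))).deriv
  -- the evolution of the first and second `x`-derivatives of the eigenfunctions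
  have ψ1t : pdt (pdx ψ) = fun x t => 3 * pdx (pdx (pdx ψ)) x t
      + 2 * (pdx u x t * ψ x t + u x t * pdx ψ x t) := by
    funext x t
    have e : pdt ψ = fun x t => 3 * pdx (pdx ψ) x t + 2 * (u x t * ψ x t) := by
      funext x t
      rw [hψt]
      ring
    rw [hψ.pdt_pdx, e]
    exact (((hψ.pdx.pdx.hasDerivAt_x x t).const_mul 3).add
      (((hu.hasDerivAt_x x t).mul (hψ.hasDerivAt_x x t)).const_mul 2)).deriv
  have φ1t : pdt (pdx φ) = fun x t => -3 * pdx (pdx (pdx φ)) x t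
      - 2 * (pdx u x t * φ x t + u x t * pdx φ x t) := by
    funext x t
    have e : pdt φ = fun x t => -3 * pdx (pdx φ) x t - 2 * (u x t * φ x t) := by
      funext x t
      rw [hφt]
      ring
    rw [hφ.pdt_pdx, e]
    exact (((hφ.pdx.pdx.hasDerivAt_x x t).const_mul (-3)).sub
      (((hu.hasDerivAt_x x t).mul (hφ.hasDerivAt_x x t)).const_mul 2)).deriv
  have ψ2t : ∀ x t, pdt (pdx (pdx ψ)) x t = 3 * pdx (pdx (pdx (pdx ψ))) x t
      + 2 * ((pdx (pdx u) x t * ψ x t + pdx u x t * pdx ψ x t)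
        + (pdx u x t * pdx ψ x t + u x t * pdx (pdx ψ) x t)) := by
    intro x t
    rw [hψ.pdx.pdt_pdx, ψ1t]
    exact (((hψ.pdx.pdx.pdx.hasDerivAt_x x t).const_mul 3).add
      ((((hu.pdx.hasDerivAt_x x t).mul (hψ.hasDerivAt_x x t)).add
      ((hu.hasDerivAt_x x t).mul (hψ.pdx.hasDerivAt_x x t))).const_mul 2)).deriv
  have φ2t : ∀ x t, pdt (pdx (pdx φ)) x t = -3 * pdx (pdx (pdx (pdx φ))) x t
      - 2 * ((pdx (pdx u) x t * φ x t + pdx u x t * pdx φ x t)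
        + (pdx u x t * pdx φ x t + u x t * pdx (pdx φ) x t)) := by
    intro x t
    rw [hφ.pdx.pdt_pdx, φ1t]
    exact (((hφ.pdx.pdx.pdx.hasDerivAt_x x t).const_mul (-3)).sub
      ((((hu.pdx.hasDerivAt_x x t).mul (hφ.hasDerivAt_x x t)).add
      ((hu.hasDerivAt_x x t).mul (hφ.pdx.hasDerivAt_x x t))).const_mul 2)).deriv
  have gx : ∀ x t, pdx (gB ψ φ) x t = pdx φ x t * ψ x t + φ x t * pdx ψ x t := fun x t =>
    ((hφ.hasDerivAt_x x t).mul (hψ.hasDerivAt_x x t)).deriv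
  have wx : ∀ x t, pdx (wB ψ φ) x t = φ x t * pdx (pdx ψ) x t - pdx (pdx φ) x t * ψ x t := by
    intro x t
    have h : pdx (wB ψ φ) x t = _ :=
      (((hφ.hasDerivAt_x x t).mul (hψ.pdx.hasDerivAt_x x t)).sub
        ((hφ.pdx.hasDerivAt_x x t).mul (hψ.hasDerivAt_x x t))).deriv
    rw [h]
    ring
  refine ⟨fun x t => ?_, fun x t => ?_, fun x t hg => ?_⟩
  · have h : pdt (dB u ψ φ) x t = _ :=
      (((((hφ.hasDerivAt_t x t).mul (hψ.pdx.pdx.hasDerivAt_t x t)).sub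
        ((hφ.pdx.hasDerivAt_t x t).mul (hψ.pdx.hasDerivAt_t x t))).add
        ((hφ.pdx.pdx.hasDerivAt_t x t).mul (hψ.hasDerivAt_t x t))).add
        (((hu.hasDerivAt_t x t).mul (hφ.hasDerivAt_t x t)).mul (hψ.hasDerivAt_t x t))).deriv
    rw [h, ψ2t, φ2t, ψ1t, φ1t, hψt, hφt, hBq1, eψ4, eφ4, eψ3, eφ3, Pi.mul_apply]
    ring
  · have h : pdt (gB ψ φ) x t = _ :=
      ((hφ.hasDerivAt_t x t).mul (hψ.hasDerivAt_t x t)).deriv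
    rw [h, wx, hψt, hφt]
    ring
  · have h : pdt (wB ψ φ) x t = _ :=
      (((hφ.hasDerivAt_t x t).mul (hψ.pdx.hasDerivAt_t x t)).sub
        ((hφ.pdx.hasDerivAt_t x t).mul (hψ.hasDerivAt_t x t))).deriv
    have hφ0 : φ x t ≠ 0 := left_ne_zero_of_mul hg
    have hψ0 : ψ x t ≠ 0 := right_ne_zero_of_mul hg
    rw [h, gx, wx, ψ1t, φ1t, hψt, hφt, eψ3, eφ3]
    simp only [gB, wB, dB]
    field_simp
    ring
end
end

section
/- Let α ∈ ℝ, δ ∈ ℝ, and let u, v, g, w: ℝ² → ℝ (variables x,t) be smooth with g nowhere vanishing, such that u, v satisfy the Boussinesq system u_t = −3u_{xx} + 6v_x, v_t = −2u_{xxx} + 3v_{xx} − 2uu_x, and for all (x,t): g_{xx} = 3(g_x² − w²)/(4g) − ug + δ, w_{xx} = g_x w_x/(2g) − w(g_x² − w²)/(8g²) − δw/(2g) − (u/2)w + (2α − 2v + u_x)g, g_t = 3w_x, and w_t = −3g_x(g_x² − w²)/(8g²) + 3ww_x/(2g) − 3δg_x/(2g) − (3/2)u g_x + u_x g. Then U :=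 2g_x and V := g_{xx} + w_x satisfy the linearized Boussinesq system: U_t = −3U_{xx} + 6V_x and V_t = −2U_{xxx} + 3V_{xx} − 2(uU)_x. -/
/-!
The linearized first equation reduces, after cancelling `g_xxx`, to `g_xt = 3 w_xx`, the
`x`-derivative of `g_t = 3 w_x`. After inserting `g_xxt = 3 w_xxx`, the second one becomes
`w_tx = -g_xxxx - 4 (u g_x)_x`. This is the `x`-derivative of the identity
`w_t = -g_xxx - 4 u g_x`, which is obtained by differentiating the equation for `g_xx` once in `x`,
eliminating `g_xx`, and comparing with the equation for `w_t`
(`pdt_w_eq`). The only analytic input is that mixed partials of smooth functions commute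
(`pdt_pdx_comm`).
-/

noncomputable section

/-- The negative-symmetry flow for `u`: `U = u_z = 2g_x`. -/
def UB (g : ℝ → ℝ → ℝ) : ℝ → ℝ → ℝ := fun x t => 2 * pdx g x t

/-- The negative-symmetry flow for `v`: `V = v_z = g_{xx} + w_x`. -/
def VB (g w : ℝ → ℝ → ℝ) : ℝ → ℝ → ℝ := fun x t => pdx (pdx g) x t + pdx w x t

theorem smooth_slice_x {f : ℝ → ℝ → ℝ} (hf : ContDiff ℝ (⊤ : ℕ∞) (Function.uncurry f)) (x t : ℝ) :
    DifferentiableAt ℝ (fun x' => f x' t) x := by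
  have h : Differentiable ℝ (Function.uncurry f) := hf.differentiable (by simp)
  exact (h (x, t)).comp (f := fun x' : ℝ => (x', t)) x (by fun_prop)

theorem smooth_slice_t {f : ℝ → ℝ → ℝ} (hf : ContDiff ℝ (⊤ : ℕ∞) (Function.uncurry f)) (x t : ℝ) :
    DifferentiableAt ℝ (fun t' => f x t') t := by
  have h : Differentiable ℝ (Function.uncurry f) := hf.differentiable (by simp)
  exact (h (x, t)).comp (f := fun t' : ℝ => (x, t')) t (by fun_prop)

theorem pdx_eq_fderiv {f : ℝ → ℝ → ℝ} (hf : ContDiff ℝ (⊤ : ℕ∞) (Function.uncurry f)) :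
    Function.uncurry (pdx f) = fun p => fderiv ℝ (Function.uncurry f) p (1, 0) := by
  funext ⟨x, t⟩
  have h : Differentiable ℝ (Function.uncurry f) := hf.differentiable (by simp)
  exact ((h (x, t)).hasFDerivAt.comp_hasDerivAt x
    ((hasDerivAt_id x).prodMk (hasDerivAt_const x t))).deriv

theorem pdt_eq_fderiv {f : ℝ → ℝ → ℝ} (hf : ContDiff ℝ (⊤ : ℕ∞) (Function.uncurry f)) :
    Function.uncurry (pdt f) = fun p => fderiv ℝ (Function.uncurry f) p (0, 1) := by
  funext ⟨x, t⟩
  have h : Differentiable ℝ (Function.uncurry f) := hf.differentiable (by simp)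
  exact ((h (x, t)).hasFDerivAt.comp_hasDerivAt t
    ((hasDerivAt_const t x).prodMk (hasDerivAt_id t))).deriv

theorem smooth_pdx {f : ℝ → ℝ → ℝ} (hf : ContDiff ℝ (⊤ : ℕ∞) (Function.uncurry f)) :
    ContDiff ℝ (⊤ : ℕ∞) (Function.uncurry (pdx f)) := by
  rw [pdx_eq_fderiv hf]
  exact (hf.fderiv_right (m := (⊤ : ℕ∞)) (by simp)).clm_apply contDiff_const

theorem smooth_pdt {f : ℝ → ℝ → ℝ} (hf : ContDiff ℝ (⊤ : ℕ∞) (Function.uncurry f)) :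
    ContDiff ℝ (⊤ : ℕ∞) (Function.uncurry (pdt f)) := by
  rw [pdt_eq_fderiv hf]
  exact (hf.fderiv_right (m := (⊤ : ℕ∞)) (by simp)).clm_apply contDiff_const

/-- Mixed partial derivatives of a smooth function commute; this is the symmetry of the second
Fréchet derivative evaluated on the two coordinate vectors. -/
theorem pdt_pdx_comm {f : ℝ → ℝ → ℝ} (hf : ContDiff ℝ (⊤ : ℕ∞) (Function.uncurry f)) :
    pdt (pdx f) = pdx (pdt f) := by
  funext x t
  have h1 := congrFun (pdt_eq_fderiv (smooth_pdx hf)) (x, t)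
  have h2 := congrFun (pdx_eq_fderiv (smooth_pdt hf)) (x, t)
  have hd : DifferentiableAt ℝ (fderiv ℝ (Function.uncurry f)) (x, t) :=
    (hf.fderiv_right (m := (⊤ : ℕ∞)) (by simp)).differentiable (by simp) _
  have hs : IsSymmSndFDerivAt ℝ (Function.uncurry f) (x, t) :=
    hf.contDiffAt.isSymmSndFDerivAt
      (by simpa using WithTop.coe_le_coe.2 (le_top : (2 : ℕ∞) ≤ ⊤))
  rw [pdx_eq_fderiv hf, fderiv_clm_apply hd (by fun_prop)] at h1
  rw [pdt_eq_fderiv hf, fderiv_clm_apply hd (by fun_prop)] at h2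
  simp only [Function.uncurry] at h1 h2
  rw [h1, h2]
  simpa using hs (0, 1) (1, 0)

/-- The conservation-law form `w_t = -g_xxx - 4 u g_x` of the equation for `w_t`: it follows from
that equation and from the `x`-derivative of the equation for `g_xx`. -/
theorem pdt_w_eq (δ : ℝ) (u g w : ℝ → ℝ → ℝ)
    (hu : ContDiff ℝ (⊤ : ℕ∞) (Function.uncurry u))
    (hg : ContDiff ℝ (⊤ : ℕ∞) (Function.uncurry g))
    (hw : ContDiff ℝ (⊤ : ℕ∞) (Function.uncurry w))
    (hg0 : ∀ x t, g x t ≠ 0)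
    (hgxx : ∀ x t, pdx (pdx g) x t =
      3 * ((pdx g x t) ^ 2 - (w x t) ^ 2) / (4 * g x t) - u x t * g x t + δ)
    (hwt : ∀ x t, pdt w x t =
      -3 * pdx g x t * ((pdx g x t) ^ 2 - (w x t) ^ 2) / (8 * (g x t) ^ 2)
        + 3 * w x t * pdx w x t / (2 * g x t) - 3 * δ * pdx g x t / (2 * g x t)
        - (3 / 2) * u x t * pdx g x t + pdx u x t * g x t) (x t : ℝ) :
    pdt w x t = -pdx (pdx (pdx g)) x t - 4 * (u x t * pdx g x t) := by
  have du : HasDerivAt (fun x' => u x' t) (pdx u x t) x := (smooth_slice_x hu x t).hasDerivAt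
  have dg : HasDerivAt (fun x' => g x' t) (pdx g x t) x := (smooth_slice_x hg x t).hasDerivAt
  have dw : HasDerivAt (fun x' => w x' t) (pdx w x t) x := (smooth_slice_x hw x t).hasDerivAt
  have dgx : HasDerivAt (fun x' => pdx g x' t) (pdx (pdx g) x t) x :=
    (smooth_slice_x (smooth_pdx hg) x t).hasDerivAt
  have h0 := hg0 x t
  have hd := (((((dgx.pow 2).sub (dw.pow 2)).const_mul 3).div (dg.const_mul 4)
    (by simpa using h0)).sub (du.mul dg)).add_const δ
  have hfun : (fun x' => pdx (pdx g) x' t) = _ := funext fun x' => hgxx x' t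
  have hxxx := (congrArg (fun φ => deriv φ x) hfun).trans hd.deriv
  change pdx (pdx (pdx g)) x t = _ at hxxx
  rw [hxxx, hwt, hgxx]
  simp only [Pi.pow_apply, Pi.sub_apply, Pi.mul_apply]
  field_simp
  ring

theorem stmt6 (α δ : ℝ) (u v g w : ℝ → ℝ → ℝ)
    (hu : ContDiff ℝ (⊤ : ℕ∞) (Function.uncurry u))
    (hv : ContDiff ℝ (⊤ : ℕ∞) (Function.uncurry v))
    (hg : ContDiff ℝ (⊤ : ℕ∞) (Function.uncurry g))
    (hw : ContDiff ℝ (⊤ : ℕ∞) (Function.uncurry w))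
    (hg0 : ∀ x t, g x t ≠ 0)
    (hBq1 : ∀ x t, pdt u x t = -3 * pdx (pdx u) x t + 6 * pdx v x t)
    (hBq2 : ∀ x t, pdt v x t = -2 * pdx (pdx (pdx u)) x t + 3 * pdx (pdx v) x t
      - 2 * u x t * pdx u x t)
    (hgxx : ∀ x t, pdx (pdx g) x t =
      3 * ((pdx g x t) ^ 2 - (w x t) ^ 2) / (4 * g x t) - u x t * g x t + δ)
    (hwxx : ∀ x t, pdx (pdx w) x t =
      pdx g x t * pdx w x t / (2 * g x t)
        - w x t * ((pdx g x t) ^ 2 - (w x t) ^ 2) / (8 * (g x t) ^ 2)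
        - δ * w x t / (2 * g x t) - (u x t / 2) * w x t
        + (2 * α - 2 * v x t + pdx u x t) * g x t)
    (hgt : ∀ x t, pdt g x t = 3 * pdx w x t)
    (hwt : ∀ x t, pdt w x t =
      -3 * pdx g x t * ((pdx g x t) ^ 2 - (w x t) ^ 2) / (8 * (g x t) ^ 2)
        + 3 * w x t * pdx w x t / (2 * g x t) - 3 * δ * pdx g x t / (2 * g x t)
        - (3 / 2) * u x t * pdx g x t + pdx u x t * g x t) :
    (∀ x t, pdt (UB g) x t = -3 * pdx (pdx (UB g)) x t + 6 * pdx (VB g w) x t) ∧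
    (∀ x t, pdt (VB g w) x t = -2 * pdx (pdx (pdx (UB g))) x t
        + 3 * pdx (pdx (VB g w)) x t
        - 2 * pdx (fun a b => u a b * UB g a b) x t) := by
  have hgx := smooth_pdx hg
  have hgxx' := smooth_pdx hgx
  have hgxxx := smooth_pdx hgxx'
  have hwx := smooth_pdx hw
  have hwxx' := smooth_pdx hwx
  have eU : pdx (UB g) = fun x t => 2 * pdx (pdx g) x t := by
    funext x t
    exact deriv_const_mul 2 (smooth_slice_x hgx x t)
  have eUU : pdx (pdx (UB g)) = fun x t => 2 * pdx (pdx (pdx g)) x t := by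
    rw [eU]
    funext x t
    exact deriv_const_mul 2 (smooth_slice_x hgxx' x t)
  have eUUU : pdx (pdx (pdx (UB g))) = fun x t => 2 * pdx (pdx (pdx (pdx g))) x t := by
    rw [eUU]
    funext x t
    exact deriv_const_mul 2 (smooth_slice_x hgxxx x t)
  have eV : pdx (VB g w) = fun x t => pdx (pdx (pdx g)) x t + pdx (pdx w) x t := by
    funext x t
    exact deriv_add (smooth_slice_x hgxx' x t) (smooth_slice_x hwx x t)
  have eVV : pdx (pdx (VB g w)) =
      fun x t => pdx (pdx (pdx (pdx g))) x t + pdx (pdx (pdx w)) x t := by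
    rw [eV]
    funext x t
    exact deriv_add (smooth_slice_x hgxxx x t) (smooth_slice_x hwxx' x t)
  have egt : pdt g = fun x t => 3 * pdx w x t := by
    funext x t
    exact hgt x t
  have egxt : pdt (pdx g) = fun x t => 3 * pdx (pdx w) x t := by
    rw [pdt_pdx_comm hg, egt]
    funext x t
    exact deriv_const_mul 3 (smooth_slice_x hwx x t)
  have egxxt : pdt (pdx (pdx g)) = fun x t => 3 * pdx (pdx (pdx w)) x t := by
    rw [pdt_pdx_comm hgx, egxt]
    funext x t
    exact deriv_const_mul 3 (smooth_slice_x hwxx' x t)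
  constructor
  · intro x t
    have hU : pdt (UB g) x t = 2 * pdt (pdx g) x t :=
      deriv_const_mul 2 (smooth_slice_t hgx x t)
    rw [hU, eUU, eV, egxt]
    ring
  · intro x t
    have hV : pdt (VB g w) x t = pdt (pdx (pdx g)) x t + pdt (pdx w) x t :=
      deriv_add (smooth_slice_t hgxx' x t) (smooth_slice_t hwx x t)
    have dP : DifferentiableAt ℝ (fun x' => u x' t * pdx g x' t) x :=
      (smooth_slice_x hu x t).mul (smooth_slice_x hgx x t)
    have hP : pdx (fun a b => u a b * UB g a b) x t =
        2 * deriv (fun x' => u x' t * pdx g x' t) x := by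
      rw [← deriv_const_mul 2 dP]
      simp only [pdx, UB]
      congr 1
      funext x'
      ring
    have hwtx : pdx (pdt w) x t = -pdx (pdx (pdx (pdx g))) x t
        - 4 * deriv (fun x' => u x' t * pdx g x' t) x := by
      have hfun : (fun x' => pdt w x' t) = _ :=
        funext fun x' => pdt_w_eq δ u g w hu hg hw hg0 hgxx hwt x' t
      exact (congrArg (fun φ => deriv φ x) hfun).trans
        (((smooth_slice_x hgxxx x t).hasDerivAt.neg).sub (dP.hasDerivAt.const_mul 4)).deriv
    rw [hV, eUUU, eVV, egxxt, hP, pdt_pdx_comm hw, hwtx]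
    ring
end
end

section
/- Let α, δ ∈ ℝ and let u, v, g, w: ℝ → ℝ be smooth with g and w nowhere vanishing, satisfying on ℝ: 2w w'''' − 2w' w''' + (w'')² = 4u(2w w'' − (w')²) + 4u_x w w' + 4(v − α)w² + δ² and w g'' − w' g' + w'' g = (w/(2g))((g')² − w²) + (2uw + δ)g. Then p := 2g and q := −g'' + ((g')² − w²)/g + 2ug satisfy identically: (E1) p''''' + 2u p''' + 8u_x p'' + 2(u_{xx} + 4u² + 8(v − α))p' − 2(u_{xxx} − 6uu_x − 6v_x)p − 10q''' + 8u q' + 4u_x q = 0; (E2) u p''''' + 4u_x p'''' + 2(3u_{xx} − 2u²)p''' + (4u_{xxx} − 10uu_x + (5/2)v_x)p'' + (u_{xxxx} − 4uu_{xx} − 2u_x² + 3v_{xx} − 4u(v − α))p' + (v_{xxx} − 3uv_x)p − q''''' + 4u q''' + 2u_x q'' + 4(v − α)q' + v_x q = 0. -/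
/-!
The proof is differential algebra. Put `a = w'/w`, `d = δ/w`, `V = v - α` and
`K = ((g')² - w²)/(2g)`. The equation for `g` becomes `g'' = K + a g' + c g` with
`c = 2u + d - a' - a²`, and differentiating the definition of `K` gives `K' = 2aK + c g'`. So the
nonlinear equation for `g` implies a *linear* system for `(g, g', K)`, in which
`q = K - a g' + (a' + a² - d) g` is linear as well. The equation for `w`, divided by `w²`, expresses
`4V` as a polynomial in the derivatives of `a` and `u` and in `d`, where `d' = -a d`.

Hence each of the two fifth-order expressions reduces to a linear combination of `g`, `g'`, `K`
whose coefficients are polynomials in `d` and the derivatives of `a` and `u`, and these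
coefficients vanish identically (`negativeSymmetry_of_linear`). The reduction to the linear system
is `negativeSymmetry`. Both are stated for a commutative `ℝ`-algebra with a derivation and are
applied to the algebra `smoothFun` of smooth functions with the derivation `smoothDeriv`.
-/

noncomputable section

/-- The nonlocal variable `p = 2g`. -/
def pDS (g : ℝ → ℝ) : ℝ → ℝ := fun x => 2 * g x

/-- The nonlocal variable `q = -g'' + ((g')² - w²)/g + 2ug`. -/
def qDS (u g w : ℝ → ℝ) : ℝ → ℝ := fun x =>
  -deriv^[2] g x + ((deriv g x) ^ 2 - (w x) ^ 2) / g x + 2 * u x * g x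

/-- The algebra of smooth functions `ℝ → ℝ`. -/
def smoothFun : Subalgebra ℝ (ℝ → ℝ) where
  carrier := {f | ContDiff ℝ (⊤ : ℕ∞) f}
  mul_mem' {f g} (hf : ContDiff ℝ (⊤ : ℕ∞) f) (hg : ContDiff ℝ (⊤ : ℕ∞) g) :=
    ContDiff.mul hf hg
  add_mem' {f g} (hf : ContDiff ℝ (⊤ : ℕ∞) f) (hg : ContDiff ℝ (⊤ : ℕ∞) g) :=
    ContDiff.add hf hg
  algebraMap_mem' c := (contDiff_const : ContDiff ℝ (⊤ : ℕ∞) fun _ : ℝ => c)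

lemma smoothFun_contDiff (f : smoothFun) : ContDiff ℝ (⊤ : ℕ∞) (f : ℝ → ℝ) := f.2

lemma smoothFun_diff (f : smoothFun) (x : ℝ) : DifferentiableAt ℝ (f : ℝ → ℝ) x :=
  (smoothFun_contDiff f).differentiable (by simp) x

/-- Differentiation `f ↦ f'` as a derivation of the algebra of smooth functions. -/
def smoothDeriv : Derivation ℝ smoothFun smoothFun :=
  Derivation.mk'
    { toFun := fun f => ⟨deriv f, (contDiff_infty_iff_deriv.1 (smoothFun_contDiff f)).2⟩
      map_add' := fun f g => Subtype.ext <| funext fun x =>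
        deriv_add (smoothFun_diff f x) (smoothFun_diff g x)
      map_smul' := fun c f => Subtype.ext <| funext fun x =>
        deriv_const_smul c (smoothFun_diff f x) }
    fun f g => Subtype.ext <| funext fun x => by
      refine (deriv_mul (smoothFun_diff f x) (smoothFun_diff g x)).trans ?_
      simp
      ring

lemma coe_smoothDeriv (f : smoothFun) : (smoothDeriv f : ℝ → ℝ) = deriv (f : ℝ → ℝ) := rfl

lemma coe_smoothFun_ofNat (n : ℕ) [n.AtLeastTwo] (x : ℝ) :
    ((ofNat(n) : smoothFun) : ℝ → ℝ) x = ofNat(n) := rfl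

lemma coe_smoothFun_algebraMap (c x : ℝ) :
    ((algebraMap ℝ smoothFun c : smoothFun) : ℝ → ℝ) x = c := rfl

lemma deriv_iterate_pDS (n : ℕ) (g : ℝ → ℝ) (x : ℝ) :
    deriv^[n] (pDS g) x = 2 * deriv^[n] g x := by
  simp only [← iteratedDeriv_eq_iterate]
  exact iteratedDeriv_const_mul_field 2 g

lemma derivation_ofNat {R : Type*} [CommRing R] [Algebra ℝ R] (D : Derivation ℝ R R)
    (n : ℕ) [n.AtLeastTwo] :
    D (ofNat(n) : R) = 0 := by
  rw [← Nat.cast_ofNat]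
  exact D.map_natCast n

section

variable {R : Type*} [CommRing R] [Algebra ℝ R] (D : Derivation ℝ R R)

set_option linter.unusedSimpArgs false in
set_option maxRecDepth 100000 in
set_option maxHeartbeats 4000000 in
/-- Both identities for the linear system satisfied by `(g, g', K)`, with `a`, `d`, `V` standing for
`w'/w`, `δ/w`, `v - α` and with `p = 2g` substituted. The second identity is multiplied by `4`, so
that only the multiple `4 * V` occurs and no division is needed. -/
theorem negativeSymmetry_of_linear {a d u V g K q : R}
    (hd : D d = -(a * d))
    (hg : D (D g) = K + a * D g + (2 * u + d - D a - a * a) * g)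
    (hK : D K = 2 * (a * K) + (2 * u + d - D a - a * a) * D g)
    (hV : 4 * V = 2 * D (D (D a)) + 6 * (a * D (D a)) + 7 * (D a * D a) + 8 * (a * a * D a)
      + a * a * a * a
      - 8 * (u * D a) - 4 * (u * (a * a)) - 4 * (D u * a) - d * d)
    (hq : q = K - a * D g + (D a + a * a - d) * g) :
    2 * D (D (D (D (D g)))) + 4 * u * D (D (D g)) + 16 * D u * D (D g)
      + 4 * (D (D u) + 4 * u * u + 8 * V) * D g
      - 4 * (D (D (D u)) - 6 * u * D u - 6 * D V) * g
      - 10 * D (D (D q)) + 8 * u * D q + 4 * D u * q = 0 ∧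
    4 * (2 * u * D (D (D (D (D g)))) + 8 * D u * D (D (D (D g)))
      + 4 * (3 * D (D u) - 2 * u * u) * D (D (D g))
      + (8 * D (D (D u)) - 20 * u * D u + 5 * D V) * D (D g)
      + 2 * (D (D (D (D u))) - 4 * u * D (D u) - 2 * D u * D u + 3 * D (D V) - 4 * u * V) * D g
      + 2 * (D (D (D V)) - 3 * u * D V) * g
      - D (D (D (D (D q)))) + 4 * u * D (D (D q)) + 2 * D u * D (D q) + 4 * V * D q
      + D V * q) = 0 := by
  have hV1 := congrArg D hV
  simp only [Derivation.leibniz, map_add, map_sub, map_neg, smul_eq_mul, derivation_ofNat,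
    mul_zero, add_zero, hd] at hV1
  have hV2 := congrArg D hV1
  simp only [Derivation.leibniz, map_add, map_sub, map_neg, smul_eq_mul, derivation_ofNat,
    mul_zero, add_zero, hd] at hV2
  have hV3 := congrArg D hV2
  simp only [Derivation.leibniz, map_add, map_sub, map_neg, smul_eq_mul, derivation_ofNat,
    mul_zero, add_zero, hd] at hV3
  -- Opaque names for `g'` and `g''`, so that rewriting with `hg` reduces the right-hand sides below
  -- to `g`, `g1`, `K` while the left-hand sides stay `D^[k] g2`, `D^[k] q`.
  obtain ⟨g1, hg1⟩ : ∃ y, D g = y := ⟨_, rfl⟩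
  rw [hg1] at hg hK hq
  obtain ⟨g2, hg2⟩ : ∃ y, y = D g1 := ⟨_, rfl⟩
  have h2 := hg2
  rw [hg] at h2
  have hg3 := congrArg D h2
  simp only [Derivation.leibniz, Derivation.leibniz_pow, map_add, map_sub, map_neg, smul_eq_mul,
    derivation_ofNat, mul_zero, add_zero, hd, hK, hg1, hg] at hg3
  ring_nf at hg3
  have hg4 := congrArg D hg3
  simp only [Derivation.leibniz, Derivation.leibniz_pow, map_add, map_sub, map_neg, smul_eq_mul,
    derivation_ofNat, mul_zero, add_zero, hd, hK, hg1, hg] at hg4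
  ring_nf at hg4
  have hg5 := congrArg D hg4
  simp only [Derivation.leibniz, Derivation.leibniz_pow, map_add, map_sub, map_neg, smul_eq_mul,
    derivation_ofNat, mul_zero, add_zero, hd, hK, hg1, hg] at hg5
  ring_nf at hg5
  have hq1 := congrArg D hq
  simp only [Derivation.leibniz, Derivation.leibniz_pow, map_add, map_sub, map_neg, smul_eq_mul,
    derivation_ofNat, mul_zero, add_zero, hd, hK, hg1, hg] at hq1
  ring_nf at hq1
  have hq2 := congrArg D hq1
  simp only [Derivation.leibniz, Derivation.leibniz_pow, map_add, map_sub, map_neg, smul_eq_mul,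
    derivation_ofNat, mul_zero, add_zero, hd, hK, hg1, hg] at hq2
  ring_nf at hq2
  have hq3 := congrArg D hq2
  simp only [Derivation.leibniz, Derivation.leibniz_pow, map_add, map_sub, map_neg, smul_eq_mul,
    derivation_ofNat, mul_zero, add_zero, hd, hK, hg1, hg] at hq3
  ring_nf at hq3
  have hq4 := congrArg D hq3
  simp only [Derivation.leibniz, Derivation.leibniz_pow, map_add, map_sub, map_neg, smul_eq_mul,
    derivation_ofNat, mul_zero, add_zero, hd, hK, hg1, hg] at hq4
  ring_nf at hq4
  have hq5 := congrArg D hq4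
  simp only [Derivation.leibniz, Derivation.leibniz_pow, map_add, map_sub, map_neg, smul_eq_mul,
    derivation_ofNat, mul_zero, add_zero, hd, hK, hg1, hg] at hq5
  ring_nf at hq5
  constructor
  · rw [hg1, ← hg2, hg5, hg3, hq3, hq1, hq, h2]
    linear_combination (8 * g1) * hV + 6 * g * hV1
  · rw [hg1, ← hg2]
    linear_combination (norm := skip) (4 * D q - 8 * u * g1) * hV + (5 * g2 + q - 6 * u * g) * hV1
      + 6 * g1 * hV2 + 2 * g * hV3
    rw [hg5, hg4, hg3, hq5, hq3, hq2, hq1, hq, h2]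
    ring

/-- Both identities for the squared-eigenfunction system, where `e`, `wi`, `gi`, `V` stand for `δ`,
`w⁻¹`, `g⁻¹`, `v - α` and the equation for `g` is multiplied by `2g`. As in
`negativeSymmetry_of_linear`, `p = 2g` is substituted and the second identity is multiplied
by `4`. -/
theorem negativeSymmetry {w wi g gi e u V q : R} (hwi : w * wi = 1) (hgi : g * gi = 1)
    (he : D e = 0)
    (hw : 2 * w * D (D (D (D w))) - 2 * D w * D (D (D w)) + D (D w) * D (D w)
      = 4 * u * (2 * w * D (D w) - D w * D w) + 4 * D u * w * D w + 4 * V * (w * w) + e * e)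
    (hg : 2 * g * (w * D (D g) - D w * D g + D (D w) * g)
      = w * (D g * D g - w * w) + 2 * g * ((2 * u * w + e) * g))
    (hq : q = -D (D g) + (D g * D g - w * w) * gi + 2 * u * g) :
    2 * D (D (D (D (D g)))) + 4 * u * D (D (D g)) + 16 * D u * D (D g)
      + 4 * (D (D u) + 4 * u * u + 8 * V) * D g
      - 4 * (D (D (D u)) - 6 * u * D u - 6 * D V) * g
      - 10 * D (D (D q)) + 8 * u * D q + 4 * D u * q = 0 ∧
    4 * (2 * u * D (D (D (D (D g)))) + 8 * D u * D (D (D (D g)))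
      + 4 * (3 * D (D u) - 2 * u * u) * D (D (D g))
      + (8 * D (D (D u)) - 20 * u * D u + 5 * D V) * D (D g)
      + 2 * (D (D (D (D u))) - 4 * u * D (D u) - 2 * D u * D u + 3 * D (D V) - 4 * u * V) * D g
      + 2 * (D (D (D V)) - 3 * u * D V) * g
      - D (D (D (D (D q)))) + 4 * u * D (D (D q)) + 2 * D u * D (D q) + 4 * V * D q
      + D V * q) = 0 := by
  obtain ⟨a, ha⟩ : ∃ a, a = D w * wi := ⟨_, rfl⟩
  obtain ⟨d, hd⟩ : ∃ d, d = e * wi := ⟨_, rfl⟩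
  have hw1 : D w = a * w := by linear_combination -(D w) * hwi - w * ha
  have hed : e = d * w := by linear_combination -e * hwi - w * hd
  have hDd : D d = -(a * d) := by
    have h := congrArg D hed
    simp only [Derivation.leibniz, smul_eq_mul, he, hw1] at h
    linear_combination (-D d - a * d) * hwi - wi * h
  have hw2 : D (D w) = (D a + a * a) * w := by
    simp only [hw1, Derivation.leibniz, smul_eq_mul]
    ring
  have hw3 : D (D (D w)) = (D (D a) + 3 * (a * D a) + a * a * a) * w := by
    simp only [hw1, Derivation.leibniz, map_add, smul_eq_mul]
    ring
  have hw4 : D (D (D (D w))) = (D (D (D a)) + 4 * (a * D (D a)) + 3 * (D a * D a)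
      + 6 * (a * a * D a) + a * a * a * a) * w := by
    simp only [hw1, Derivation.leibniz, map_add, smul_eq_mul]
    ring
  -- `K` is defined by the linear equation for `g`; `hgK` identifies it with `((g')² - w²)/(2g)`.
  obtain ⟨K, hK⟩ : ∃ K, K = D (D g) - a * D g - (2 * u + d - D a - a * a) * g := ⟨_, rfl⟩
  have hgK : 2 * (g * K) = D g * D g - w * w := by
    rw [hw2, hw1, hed] at hg
    linear_combination (-(2 * (g * K)) + D g * D g - w * w) * hwi + wi * hg + 2 * g * w * wi * hK
  have hDK : D K = 2 * (a * K) + (2 * u + d - D a - a * a) * D g := by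
    have h := congrArg D hgK
    simp only [Derivation.leibniz, map_sub, smul_eq_mul, derivation_ofNat, hw1] at h
    have h' : 2 * (D K - (2 * (a * K) + (2 * u + d - D a - a * a) * D g)) = 0 := by
      linear_combination (-2 * (D K - (2 * (a * K) + (2 * u + d - D a - a * a) * D g))) * hgi
        + gi * h - 2 * a * gi * hgK - 2 * gi * D g * hK
    have h2 : algebraMap ℝ R (1 / 2) * 2 = 1 := by
      rw [← map_ofNat (algebraMap ℝ R) 2, ← map_mul]
      norm_num
    linear_combination algebraMap ℝ R (1 / 2) * h'
      - (D K - (2 * (a * K) + (2 * u + d - D a - a * a) * D g)) * h2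
  refine negativeSymmetry_of_linear D (K := K) hDd ?_ hDK ?_ ?_
  · linear_combination -hK
  · rw [hw4, hw3, hw2, hw1, hed] at hw
    linear_combination (-wi * wi) * hw + (1 + w * wi) * (-(4 * V) + (2 * D (D (D a))
      + 6 * (a * D (D a)) + 7 * (D a * D a) + 8 * (a * a * D a) + a * a * a * a
      - 8 * (u * D a) - 4 * (u * (a * a)) - 4 * (D u * a) - d * d)) * hwi
  · linear_combination hq - gi * hgK + 2 * K * hgi + hK

end

set_option linter.unusedSimpArgs false in
theorem stmt17 (α δ : ℝ) (u v g w : ℝ → ℝ)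
    (hu : ContDiff ℝ (⊤ : ℕ∞) u) (hv : ContDiff ℝ (⊤ : ℕ∞) v)
    (hg : ContDiff ℝ (⊤ : ℕ∞) g) (hw : ContDiff ℝ (⊤ : ℕ∞) w)
    (hg0 : ∀ x : ℝ, g x ≠ 0) (hw0 : ∀ x : ℝ, w x ≠ 0)
    (hweq : ∀ x : ℝ,
      2 * w x * deriv^[4] w x - 2 * deriv w x * deriv^[3] w x + (deriv^[2] w x) ^ 2 =
        4 * u x * (2 * w x * deriv^[2] w x - (deriv w x) ^ 2)
          + 4 * deriv u x * w x * deriv w x + 4 * (v x - α) * (w x) ^ 2 + δ ^ 2)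
    (hgeq : ∀ x : ℝ,
      w x * deriv^[2] g x - deriv w x * deriv g x + deriv^[2] w x * g x =
        (w x / (2 * g x)) * ((deriv g x) ^ 2 - (w x) ^ 2)
          + (2 * u x * w x + δ) * g x) :
    (∀ x : ℝ, deriv^[5] (pDS g) x + 2 * u x * deriv^[3] (pDS g) x
        + 8 * deriv u x * deriv^[2] (pDS g) x
        + 2 * (deriv^[2] u x + 4 * u x ^ 2 + 8 * (v x - α)) * deriv (pDS g) x
        - 2 * (deriv^[3] u x - 6 * u x * deriv u x - 6 * deriv v x) * pDS g x
        - 10 * deriv^[3] (qDS u g w) x + 8 * u x * deriv (qDS u g w) x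
        + 4 * deriv u x * qDS u g w x = 0) ∧
    (∀ x : ℝ, u x * deriv^[5] (pDS g) x + 4 * deriv u x * deriv^[4] (pDS g) x
        + 2 * (3 * deriv^[2] u x - 2 * u x ^ 2) * deriv^[3] (pDS g) x
        + (4 * deriv^[3] u x - 10 * u x * deriv u x + (5 / 2) * deriv v x)
            * deriv^[2] (pDS g) x
        + (deriv^[4] u x - 4 * u x * deriv^[2] u x - 2 * (deriv u x) ^ 2
            + 3 * deriv^[2] v x - 4 * u x * (v x - α)) * deriv (pDS g) x
        + (deriv^[3] v x - 3 * u x * deriv v x) * pDS g x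
        - deriv^[5] (qDS u g w) x + 4 * u x * deriv^[3] (qDS u g w) x
        + 2 * deriv u x * deriv^[2] (qDS u g w) x
        + 4 * (v x - α) * deriv (qDS u g w) x + deriv v x * qDS u g w x = 0) := by
  let D := smoothDeriv
  let U : smoothFun := ⟨u, hu⟩
  let W : smoothFun := ⟨w, hw⟩
  let G : smoothFun := ⟨g, hg⟩
  let Wi : smoothFun := ⟨fun x => (w x)⁻¹, hw.inv hw0⟩
  let Gi : smoothFun := ⟨fun x => (g x)⁻¹, hg.inv hg0⟩
  let V : smoothFun := ⟨v, hv⟩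
  let A : smoothFun := algebraMap ℝ smoothFun α
  let E : smoothFun := algebraMap ℝ smoothFun δ
  let Q : smoothFun := -D (D G) + (D G * D G - W * W) * Gi + 2 * U * G
  have hQ : qDS u g w = Q := by
    funext x
    simp only [Subalgebra.coe_add, Subalgebra.coe_sub, Subalgebra.coe_mul, Subalgebra.coe_neg,
    Subalgebra.coe_zero, Pi.add_apply, Pi.sub_apply, Pi.mul_apply, Pi.neg_apply,
    Pi.zero_apply, coe_smoothDeriv, coe_smoothFun_ofNat, coe_smoothFun_algebraMap,
    Function.iterate_succ, Function.iterate_zero, Function.comp_apply, id, qDS, sq, div_eq_mul_inv,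
    Q, D, U, W, G, Gi]
  have h := negativeSymmetry D (w := W) (wi := Wi) (g := G) (gi := Gi) (e := E) (u := U)
    (V := V - A) (q := Q)
    (Subtype.ext <| funext fun x => by simp [W, Wi, hw0 x])
    (Subtype.ext <| funext fun x => by simp [G, Gi, hg0 x])
    (D.map_algebraMap δ)
    (Subtype.ext <| funext fun x => by
      have h := hweq x
      simp only [Subalgebra.coe_add, Subalgebra.coe_sub, Subalgebra.coe_mul, Subalgebra.coe_neg,
    Subalgebra.coe_zero, Pi.add_apply, Pi.sub_apply, Pi.mul_apply, Pi.neg_apply,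
    Pi.zero_apply, coe_smoothDeriv, coe_smoothFun_ofNat, coe_smoothFun_algebraMap,
    Function.iterate_succ, Function.iterate_zero, Function.comp_apply, id, D, U, W, V, A, E] at h ⊢
      linear_combination h)
    (Subtype.ext <| funext fun x => by
      have h := hgeq x
      have h0 := hg0 x
      simp only [Subalgebra.coe_add, Subalgebra.coe_sub, Subalgebra.coe_mul, Subalgebra.coe_neg,
    Subalgebra.coe_zero, Pi.add_apply, Pi.sub_apply, Pi.mul_apply, Pi.neg_apply,
    Pi.zero_apply, coe_smoothDeriv, coe_smoothFun_ofNat, coe_smoothFun_algebraMap,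
    Function.iterate_succ, Function.iterate_zero, Function.comp_apply, id, D, U, W, G, E] at h ⊢
      field_simp at h
      linear_combination h)
    rfl
  have hA : D (V - A) = D V := by rw [map_sub, D.map_algebraMap α, sub_zero]
  rw [hA] at h
  have hp1 (x : ℝ) : deriv (pDS g) x = 2 * deriv g x := deriv_iterate_pDS 1 g x
  rw [hQ]
  constructor <;> intro x
  · have h1 := congrFun (congrArg Subtype.val h.1) x
    simp only [deriv_iterate_pDS, hp1, pDS]
    simp only [Subalgebra.coe_add, Subalgebra.coe_sub, Subalgebra.coe_mul, Subalgebra.coe_neg,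
    Subalgebra.coe_zero, Pi.add_apply, Pi.sub_apply, Pi.mul_apply, Pi.neg_apply,
    Pi.zero_apply, coe_smoothDeriv, coe_smoothFun_ofNat, coe_smoothFun_algebraMap,
    Function.iterate_succ, Function.iterate_zero, Function.comp_apply, id, D, U, V, A, G] at h1 ⊢
    linear_combination h1
  · have h2 := congrFun (congrArg Subtype.val h.2) x
    simp only [deriv_iterate_pDS, hp1, pDS]
    simp only [Subalgebra.coe_add, Subalgebra.coe_sub, Subalgebra.coe_mul, Subalgebra.coe_neg,
    Subalgebra.coe_zero, Pi.add_apply, Pi.sub_apply, Pi.mul_apply, Pi.neg_apply,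
    Pi.zero_apply, coe_smoothDeriv, coe_smoothFun_ofNat, coe_smoothFun_algebraMap,
    Function.iterate_succ, Function.iterate_zero, Function.comp_apply, id, D, U, V, A, G] at h2 ⊢
    linear_combination h2 / 4
end
end

section
/- Let δ₂, δ₃ ∈ ℝ and r(y) = −2y³ − 2δ₂y − δ₃. Let v: ℝ² → ℝ (variables x,t) be smooth with v_x ≠ 0 everywhere and satisfying the Krichever–Novikov equation v_t = v_{xxx} − 3(v_{xx}² − r(v))/(2v_x). Define u := (2v_x v_{xxx} − v_{xx}² + r(v))/(4v_x²). Then the pair (u,v) satisfies the Drinfeld–Sokolov system: u_t = u_{xxx} − 6uu_x − 6v_x and v_t = −2v_{xxx} + 6uv_x. -/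
/-!
Write `v₁, v₂, …` for the `x`-derivatives of `v` and `r = r(v)`, `r' = r'(v)`.  The definition of `u`
is equivalent to the relation `4 u v₁² = 2 v₁ v₃ - v₂² + r`, and substituting it into the
Krichever–Novikov equation gives the second Drinfeld–Sokolov equation `v_t = 6 u v₁ - 2 v₃` at once.

Differentiating the relation in `x`, the terms `2 v₂ v₃` cancel and `v₁` can be divided out, so that
`v₄ = 2 u_x v₁ + 4 u v₂ - r'/2`.  With this, the `x`-derivatives of `v_t` have short expressions:
* `(v_t)_x = 2 u_x v₁ - 2 u v₂ + r'`,
* `(v_t)_xx = 2 u_xx v₁ - 2 u v₃ - 12 v v₁`,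
* `(v_t)_xxx = 2 u_xxx v₁ + 2 u_xx v₂ - 2 u_x v₃ - 2 u v₄ - 12 v₁² - 12 v v₂`.

Since `∂ₜ` and `∂ₓ` commute on smooth functions, differentiating the relation in `t` gives
`4 u_t v₁² + 8 u v₁ (v_t)_x = 2 v₃ (v_t)_x + 2 v₁ (v_t)_xxx - 2 v₂ (v_t)_xx + r' v_t`.
Inserting the expressions above and dividing by `4 v₁²` yields the first equation.
-/

noncomputable section

/-- The cubic polynomial `r(y) = -2y³ - 2δ₂y - δ₃` of the Krichever–Novikov equation. -/
def rKN (δ₂ δ₃ y : ℝ) : ℝ := -2 * y ^ 3 - 2 * δ₂ * y - δ₃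

/-- The differential substitution `u = (2v_x v_{xxx} - v_{xx}² + r(v))/(4v_x²)`
reducing DS-III to the Krichever–Novikov equation. -/
def uKN (δ₂ δ₃ : ℝ) (v : ℝ → ℝ → ℝ) : ℝ → ℝ → ℝ := fun x t =>
  (2 * pdx v x t * pdx^[3] v x t - (pdx^[2] v x t) ^ 2 + rKN δ₂ δ₃ (v x t))
    / (4 * (pdx v x t) ^ 2)

/-- Joint smoothness of a function of the two variables `x` and `t`. -/
def SmoothXT (f : ℝ → ℝ → ℝ) : Prop := ContDiff ℝ (⊤ : ℕ∞) (Function.uncurry f)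

namespace SmoothXT

variable {f : ℝ → ℝ → ℝ}

lemma hasDerivAt_fderiv_x (hf : SmoothXT f) (x t : ℝ) :
    HasDerivAt (fun x' => f x' t) (fderiv ℝ (Function.uncurry f) (x, t) (1, 0)) x := by
  have h : HasFDerivAt (Function.uncurry f) (fderiv ℝ (Function.uncurry f) (x, t)) (x, t) :=
    (hf.differentiable (by simp) (x, t)).hasFDerivAt
  exact h.comp_hasDerivAt x ((hasDerivAt_id x).prodMk (hasDerivAt_const x t))

lemma hasDerivAt_fderiv_t (hf : SmoothXT f) (x t : ℝ) :
    HasDerivAt (fun t' => f x t') (fderiv ℝ (Function.uncurry f) (x, t) (0, 1)) t := by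
  have h : HasFDerivAt (Function.uncurry f) (fderiv ℝ (Function.uncurry f) (x, t)) (x, t) :=
    (hf.differentiable (by simp) (x, t)).hasFDerivAt
  exact h.comp_hasDerivAt t ((hasDerivAt_const t x).prodMk (hasDerivAt_id t))

lemma uncurry_pdx (hf : SmoothXT f) :
    Function.uncurry (pdx f) = fun z => fderiv ℝ (Function.uncurry f) z (1, 0) := by
  funext ⟨x, t⟩
  exact (hf.hasDerivAt_fderiv_x x t).deriv

lemma uncurry_pdt (hf : SmoothXT f) :
    Function.uncurry (pdt f) = fun z => fderiv ℝ (Function.uncurry f) z (0, 1) := by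
  funext ⟨x, t⟩
  exact (hf.hasDerivAt_fderiv_t x t).deriv

lemma hasDerivAt_x (hf : SmoothXT f) (x t : ℝ) :
    HasDerivAt (fun x' => f x' t) (pdx f x t) x :=
  (hf.hasDerivAt_fderiv_x x t).differentiableAt.hasDerivAt

lemma hasDerivAt_t (hf : SmoothXT f) (x t : ℝ) :
    HasDerivAt (fun t' => f x t') (pdt f x t) t :=
  (hf.hasDerivAt_fderiv_t x t).differentiableAt.hasDerivAt

lemma contDiff_fderiv (hf : SmoothXT f) :
    ContDiff ℝ (⊤ : ℕ∞) (fderiv ℝ (Function.uncurry f)) :=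
  ContDiff.fderiv_right hf (by simp)

lemma dx (hf : SmoothXT f) : SmoothXT (pdx f) := by
  unfold SmoothXT
  rw [hf.uncurry_pdx]
  exact hf.contDiff_fderiv.clm_apply contDiff_const

lemma dt (hf : SmoothXT f) : SmoothXT (pdt f) := by
  unfold SmoothXT
  rw [hf.uncurry_pdt]
  exact hf.contDiff_fderiv.clm_apply contDiff_const

/-- Schwarz's theorem: both mixed derivatives are values of the symmetric second Fréchet
derivative of `f` on the coordinate vectors. -/
lemma pdt_pdx (hf : SmoothXT f) (x t : ℝ) :
    pdt (pdx f) x t = pdx (pdt f) x t := by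
  have h2 : HasFDerivAt (fderiv ℝ (Function.uncurry f))
      (fderiv ℝ (fderiv ℝ (Function.uncurry f)) (x, t)) (x, t) :=
    (hf.contDiff_fderiv.differentiable (by simp) (x, t)).hasFDerivAt
  have key : ∀ a b : ℝ × ℝ, fderiv ℝ (fun z => fderiv ℝ (Function.uncurry f) z a) (x, t) b
      = fderiv ℝ (fderiv ℝ (Function.uncurry f)) (x, t) b a := fun a b => by
    rw [(h2.clm_apply (hasFDerivAt_const a (x, t))).fderiv]
    simp
  have hsymm : IsSymmSndFDerivAt ℝ (Function.uncurry f) (x, t) :=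
    (ContDiff.contDiffAt hf).isSymmSndFDerivAt (by simpa using WithTop.coe_le_coe.2 (le_top : (2 : ℕ∞) ≤ ⊤))
  have e1 : pdt (pdx f) x t = _ := (hf.dx.hasDerivAt_fderiv_t x t).deriv
  have e2 : pdx (pdt f) x t = _ := (hf.dt.hasDerivAt_fderiv_x x t).deriv
  rw [e1, e2, hf.uncurry_pdx, hf.uncurry_pdt, key, key]
  exact hsymm _ _

end SmoothXT

lemma hasDerivAt_rKN_comp (δ₂ δ₃ : ℝ) {g : ℝ → ℝ} {g' y : ℝ} (hg : HasDerivAt g g' y) :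
    HasDerivAt (fun z => rKN δ₂ δ₃ (g z)) ((-6 * g y ^ 2 - 2 * δ₂) * g') y := by
  have h := (((hg.pow 3).const_mul (-2)).sub (hg.const_mul (2 * δ₂))).sub_const δ₃
  refine h.congr_deriv ?_
  push_cast
  ring

lemma smoothXT_uKN (δ₂ δ₃ : ℝ) {v : ℝ → ℝ → ℝ} (hv : SmoothXT v)
    (hvx : ∀ x t, pdx v x t ≠ 0) : SmoothXT (uKN δ₂ δ₃ v) := by
  have h0 : ContDiff ℝ (⊤ : ℕ∞) (Function.uncurry v) := hv
  have h1 : ContDiff ℝ (⊤ : ℕ∞) (Function.uncurry (pdx v)) := hv.dx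
  have h2 : ContDiff ℝ (⊤ : ℕ∞) (Function.uncurry (pdx (pdx v))) := hv.dx.dx
  have h3 : ContDiff ℝ (⊤ : ℕ∞) (Function.uncurry (pdx (pdx (pdx v)))) := hv.dx.dx.dx
  have hr : ContDiff ℝ (⊤ : ℕ∞) (fun z => rKN δ₂ δ₃ (Function.uncurry v z)) := by
    unfold rKN
    fun_prop
  exact ((((contDiff_const (c := (2 : ℝ))).mul h1).mul h3).sub (h2.pow 2) |>.add hr).div
    ((contDiff_const (c := (4 : ℝ))).mul (h1.pow 2))
    (fun z => mul_ne_zero (by norm_num) (pow_ne_zero 2 (hvx z.1 z.2)))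

theorem stmt19 (δ₂ δ₃ : ℝ) (v : ℝ → ℝ → ℝ)
    (hv : ContDiff ℝ (⊤ : ℕ∞) (Function.uncurry v))
    (hvx : ∀ x t, pdx v x t ≠ 0)
    (hKN : ∀ x t, pdt v x t = pdx^[3] v x t
      - 3 * ((pdx^[2] v x t) ^ 2 - rKN δ₂ δ₃ (v x t)) / (2 * pdx v x t)) :
    (∀ x t, pdt (uKN δ₂ δ₃ v) x t =
        pdx^[3] (uKN δ₂ δ₃ v) x t
          - 6 * uKN δ₂ δ₃ v x t * pdx (uKN δ₂ δ₃ v) x t - 6 * pdx v x t) ∧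
    (∀ x t, pdt v x t = -2 * pdx^[3] v x t + 6 * uKN δ₂ δ₃ v x t * pdx v x t) := by
  have hs : SmoothXT v := hv
  have hu : SmoothXT (uKN δ₂ δ₃ v) := smoothXT_uKN δ₂ δ₃ hs hvx
  have hrel : ∀ x t, 4 * uKN δ₂ δ₃ v x t * pdx v x t ^ 2
      = 2 * pdx v x t * pdx (pdx (pdx v)) x t - pdx (pdx v) x t ^ 2 + rKN δ₂ δ₃ (v x t) := by
    intro x t
    have h := hvx x t
    simp only [uKN, Function.iterate_succ, Function.iterate_zero, Function.comp_apply, id_eq]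
    field_simp
  have hvt : ∀ x t, pdt v x t
      = -2 * pdx (pdx (pdx v)) x t + 6 * uKN δ₂ δ₃ v x t * pdx v x t := by
    intro x t
    have h := hvx x t
    have hr := hrel x t
    rw [hKN x t]
    simp only [Function.iterate_succ, Function.iterate_zero, Function.comp_apply, id_eq]
    field_simp
    linear_combination (-3) * hr
  refine ⟨fun x t => ?_, hvt⟩
  simp only [Function.iterate_succ, Function.iterate_zero, Function.comp_apply, id_eq]
  generalize uKN δ₂ δ₃ v = u at *
  have hv4 : ∀ x t, pdx (pdx (pdx (pdx v))) x t = 2 * pdx u x t * pdx v x t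
      + 4 * u x t * pdx (pdx v) x t - (-6 * v x t ^ 2 - 2 * δ₂) / 2 := by
    intro x t
    have hl := ((hu.hasDerivAt_x x t).const_mul 4).mul ((hs.dx.hasDerivAt_x x t).pow 2)
    have hr := ((((hs.dx.hasDerivAt_x x t).const_mul 2).mul
      (hs.dx.dx.dx.hasDerivAt_x x t)).sub ((hs.dx.dx.hasDerivAt_x x t).pow 2)).add
      (hasDerivAt_rKN_comp δ₂ δ₃ (hs.hasDerivAt_x x t))
    have h := hl.unique (hr.congr_of_eventuallyEq (.of_forall fun x' => hrel x' t))
    simp only [Pi.pow_apply, Nat.cast_ofNat] at h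
    apply mul_left_cancel₀ (hvx x t)
    linear_combination (-1 / 2) * h
  have hF1 : ∀ x t, pdx (pdt v) x t = 2 * pdx u x t * pdx v x t - 2 * u x t * pdx (pdx v) x t
      + (-6 * v x t ^ 2 - 2 * δ₂) := by
    intro x t
    have hr := ((hs.dx.dx.dx.hasDerivAt_x x t).const_mul (-2)).add
      (((hu.hasDerivAt_x x t).const_mul 6).mul (hs.dx.hasDerivAt_x x t))
    have h := (hs.dt.hasDerivAt_x x t).unique
      (hr.congr_of_eventuallyEq (.of_forall fun x' => hvt x' t))
    linear_combination h - 2 * hv4 x t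
  have hF2 : ∀ x t, pdx (pdx (pdt v)) x t = 2 * pdx (pdx u) x t * pdx v x t
      - 2 * u x t * pdx (pdx (pdx v)) x t - 12 * v x t * pdx v x t := by
    intro x t
    have hr := ((((hu.dx.hasDerivAt_x x t).const_mul 2).mul (hs.dx.hasDerivAt_x x t)).sub
      (((hu.hasDerivAt_x x t).const_mul 2).mul (hs.dx.dx.hasDerivAt_x x t))).add
      ((((hs.hasDerivAt_x x t).pow 2).const_mul (-6)).sub_const (2 * δ₂))
    have h := (hs.dt.dx.hasDerivAt_x x t).unique
      (hr.congr_of_eventuallyEq (.of_forall fun x' => hF1 x' t))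
    simp only [Nat.cast_ofNat] at h
    linear_combination h
  have hF3 : pdx (pdx (pdx (pdt v))) x t = 2 * pdx (pdx (pdx u)) x t * pdx v x t
      + 2 * pdx (pdx u) x t * pdx (pdx v) x t - 2 * pdx u x t * pdx (pdx (pdx v)) x t
      - 2 * u x t * pdx (pdx (pdx (pdx v))) x t - 12 * pdx v x t ^ 2
      - 12 * v x t * pdx (pdx v) x t := by
    have hr := ((((hu.dx.dx.hasDerivAt_x x t).const_mul 2).mul (hs.dx.hasDerivAt_x x t)).sub
      (((hu.hasDerivAt_x x t).const_mul 2).mul (hs.dx.dx.dx.hasDerivAt_x x t))).sub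
      (((hs.hasDerivAt_x x t).const_mul 12).mul (hs.dx.hasDerivAt_x x t))
    have h := (hs.dt.dx.dx.hasDerivAt_x x t).unique
      (hr.congr_of_eventuallyEq (.of_forall fun x' => hF2 x' t))
    linear_combination h
  -- commute `∂ₜ` past the `x`-derivatives of `v`, as equalities of functions
  have c1 : pdt (pdx v) = pdx (pdt v) := funext₂ hs.pdt_pdx
  have c2 : pdt (pdx (pdx v)) = pdx (pdx (pdt v)) := by
    rw [← c1]; exact funext₂ hs.dx.pdt_pdx
  have c3 : pdt (pdx (pdx (pdx v))) = pdx (pdx (pdx (pdt v))) := by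
    rw [← c2]; exact funext₂ hs.dx.dx.pdt_pdx
  have hl := ((hu.hasDerivAt_t x t).const_mul 4).mul ((hs.dx.hasDerivAt_t x t).pow 2)
  have hr := ((((hs.dx.hasDerivAt_t x t).const_mul 2).mul
    (hs.dx.dx.dx.hasDerivAt_t x t)).sub ((hs.dx.dx.hasDerivAt_t x t).pow 2)).add
    (hasDerivAt_rKN_comp δ₂ δ₃ (hs.hasDerivAt_t x t))
  have h := hl.unique (hr.congr_of_eventuallyEq (.of_forall fun t' => hrel x t'))
  simp only [Pi.pow_apply, Nat.cast_ofNat] at h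
  rw [c1, c2, c3, hF3, hF2, hF1, hv4, hvt] at h
  apply mul_left_cancel₀ (pow_ne_zero 2 (hvx x t))
  linear_combination (1 / 4) * h
end
end
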